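/- Let κ ≥ 0, λ > 0, σ > 0, let b(t) = sinh(σt)/sinh(σ) be a risk-averse unit strategy, and define q_σ(t) = sinh(σt)/sinh(σ) + (κ/σ)·cosh(σt)/sinh(σ). Then a(t) = (λ/2)(q_σ(0) − q_σ(t)) + (1 + (λ/2)(q_σ(1) − q_σ(0))) t is a unit trading strategy and is the best response to b: for every continuously differentiable unit trading strategy g, Cost_A(a, b) ≤ Cost_A(g, b). -/

import Mathlib

open Real

/-- The total cost of trader A trading strategy `a` in competition with the
`lam`-scaled strategy `b`, with market impact coefficient `κ`. -/
noncomputable def costA (κ lam : ℝ) (a b : ℝ → ℝ) : ℝ :=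
  ∫ t in (0:ℝ)..1,
    ((deriv a t + lam * deriv b t) * deriv a t + κ * (a t + lam * b t) * deriv a t)

/-!
A trader's permanent impact on itself, `∫ κ a a'`, depends only on the endpoints of `a`, so the cost
is the quadratic functional `∫ a'² + λ (b' + κ b) a'` plus a constant. Its Euler–Lagrange equation
has the first integral `2 a' + λ (b' + κ b) = c`; for `a` satisfying it, completing the square shows
that any `g` with the same endpoints costs exactly `∫ (g' - a')²` more than `a`. Given a primitive
`q` of `b' + κ b`, the first integral is solved by `a = -(λ / 2) q` plus an affine function, which
the endpoint conditions determine.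
-/

theorem integral_mul_deriv_self {f : ℝ → ℝ} (hf : ContDiff ℝ 1 f) (x y : ℝ) :
    ∫ t in x..y, f t * deriv f t = (f y ^ 2 - f x ^ 2) / 2 := by
  rw [← integral_id]
  exact intervalIntegral.integral_comp_mul_deriv (g := fun u ↦ u)
    (fun t _ ↦ (hf.differentiable_one t).hasDerivAt) hf.continuous_deriv_one.continuousOn
    continuous_id

section Cost

variable {κ lam c : ℝ} {a b g : ℝ → ℝ}

theorem costA_eq_integral_add (ha : ContDiff ℝ 1 a) (hb : ContDiff ℝ 1 b) :
    costA κ lam a b =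
      (∫ t in (0 : ℝ)..1, (deriv a t ^ 2 + lam * (deriv b t + κ * b t) * deriv a t)) +
        κ * ((a 1 ^ 2 - a 0 ^ 2) / 2) := by
  rw [← integral_mul_deriv_self ha, ← intervalIntegral.integral_const_mul,
    ← intervalIntegral.integral_add (Continuous.intervalIntegrable (by fun_prop) _ _)
      (Continuous.intervalIntegrable (by fun_prop) _ _)]
  refine intervalIntegral.integral_congr fun t _ ↦ ?_
  ring

theorem costA_eq_costA_add_integral_sq (ha : ContDiff ℝ 1 a) (hb : ContDiff ℝ 1 b)
    (hg : ContDiff ℝ 1 g) (h0 : g 0 = a 0) (h1 : g 1 = a 1)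
    (hc : ∀ t ∈ Set.Icc 0 1, 2 * deriv a t + lam * (deriv b t + κ * b t) = c) :
    costA κ lam g b = costA κ lam a b + ∫ t in (0 : ℝ)..1, (deriv g t - deriv a t) ^ 2 := by
  have ha' : Continuous (deriv a) := ha.continuous_deriv_one
  have hg' : Continuous (deriv g) := hg.continuous_deriv_one
  have linear_term_eq_zero : ∫ t in (0 : ℝ)..1, c * (deriv g t - deriv a t) = 0 := by
    rw [intervalIntegral.integral_const_mul, intervalIntegral.integral_sub
        (hg'.intervalIntegrable _ _) (ha'.intervalIntegrable _ _),
      intervalIntegral.integral_deriv_eq_sub (fun t _ ↦ hg.differentiable_one t)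
        (hg'.intervalIntegrable _ _),
      intervalIntegral.integral_deriv_eq_sub (fun t _ ↦ ha.differentiable_one t)
        (ha'.intervalIntegrable _ _), h0, h1, sub_self, mul_zero]
  have complete_square (t : ℝ) (ht : t ∈ Set.Icc 0 1) :
      deriv g t ^ 2 + lam * (deriv b t + κ * b t) * deriv g t =
        deriv a t ^ 2 + lam * (deriv b t + κ * b t) * deriv a t +
          (deriv g t - deriv a t) ^ 2 + c * (deriv g t - deriv a t) := by
    rw [← hc t ht]
    ring
  rw [costA_eq_integral_add hg hb, costA_eq_integral_add ha hb, h0, h1, add_right_comm,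
    intervalIntegral.integral_congr fun t ht ↦
      complete_square t (Set.uIcc_of_le (zero_le_one' ℝ) ▸ ht),
    intervalIntegral.integral_add, intervalIntegral.integral_add, linear_term_eq_zero, add_zero]
  all_goals exact Continuous.intervalIntegrable (by fun_prop) _ _

theorem costA_le_costA (ha : ContDiff ℝ 1 a) (hb : ContDiff ℝ 1 b) (hg : ContDiff ℝ 1 g)
    (h0 : g 0 = a 0) (h1 : g 1 = a 1)
    (hc : ∀ t ∈ Set.Icc 0 1, 2 * deriv a t + lam * (deriv b t + κ * b t) = c) :
    costA κ lam a b ≤ costA κ lam g b := by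
  rw [costA_eq_costA_add_integral_sq ha hb hg h0 h1 hc]
  exact le_add_of_nonneg_right
    (intervalIntegral.integral_nonneg zero_le_one fun t _ ↦ sq_nonneg _)

end Cost

section BestResponse

/-- The best response to a strategy `b` scaled by `lam`, expressed through a primitive `q` of
`b' + κ b`. It depends on `b` and `κ` only through `q`, and is unchanged by adding a constant
to `q`. -/
noncomputable def bestResponse (lam : ℝ) (q : ℝ → ℝ) (t : ℝ) : ℝ :=
  (lam / 2) * (q 0 - q t) + (1 + (lam / 2) * (q 1 - q 0)) * t

variable (lam : ℝ) (q : ℝ → ℝ)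

theorem bestResponse_zero : bestResponse lam q 0 = 0 := by
  simp [bestResponse]

theorem bestResponse_one : bestResponse lam q 1 = 1 := by
  rw [bestResponse]
  ring

variable {q}

theorem hasDerivAt_bestResponse {q' t : ℝ} (hq : HasDerivAt q q' t) :
    HasDerivAt (bestResponse lam q) (1 + (lam / 2) * (q 1 - q 0) - (lam / 2) * q') t := by
  refine HasDerivAt.congr_deriv (((hq.const_sub (q 0)).const_mul (lam / 2)).add
    ((hasDerivAt_id t).const_mul (1 + (lam / 2) * (q 1 - q 0)))) ?_
  ring

theorem contDiff_bestResponse {n : WithTop ℕ∞} (hq : ContDiff ℝ n q) :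
    ContDiff ℝ n (bestResponse lam q) := by
  unfold bestResponse
  fun_prop

theorem best_response_to_risk_averse_general {κ : ℝ} {b : ℝ → ℝ} (hb : ContDiff ℝ 1 b)
    (hq : ∀ t, HasDerivAt q (deriv b t + κ * b t) t) :
    bestResponse lam q 0 = 0 ∧ bestResponse lam q 1 = 1 ∧
      ∀ g : ℝ → ℝ, ContDiff ℝ 1 g → g 0 = 0 → g 1 = 1 →
        costA κ lam (bestResponse lam q) b ≤ costA κ lam g b := by
  have hqC : ContDiff ℝ 1 q := by
    refine contDiff_one_iff_deriv.2 ⟨fun t ↦ (hq t).differentiableAt, ?_⟩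
    rw [funext fun t ↦ (hq t).deriv]
    exact hb.continuous_deriv_one.add (hb.continuous.const_mul κ)
  have first_integral (t : ℝ) :
      2 * deriv (bestResponse lam q) t + lam * (deriv b t + κ * b t) =
        2 * (1 + (lam / 2) * (q 1 - q 0)) := by
    rw [(hasDerivAt_bestResponse lam (hq t)).deriv]
    ring
  refine ⟨bestResponse_zero lam q, bestResponse_one lam q, fun g hg hg0 hg1 ↦ ?_⟩
  exact costA_le_costA (contDiff_bestResponse lam hqC) hb hg
    (hg0.trans (bestResponse_zero lam q).symm) (hg1.trans (bestResponse_one lam q).symm)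
    fun t _ ↦ first_integral t

end BestResponse

section RiskAverse

/-- The unit trading strategy of a trader with risk-aversion `σ`. -/
noncomputable def riskAverseStrategy (σ t : ℝ) : ℝ :=
  Real.sinh (σ * t) / Real.sinh σ

/-- The function `q_σ`, a primitive of `b' + κ b` for the risk-averse strategy `b`. -/
noncomputable def riskAversePrimitive (κ σ t : ℝ) : ℝ :=
  riskAverseStrategy σ t + (κ / σ) * (Real.cosh (σ * t) / Real.sinh σ)

theorem contDiff_riskAverseStrategy (σ : ℝ) {n : WithTop ℕ∞} :
    ContDiff ℝ n (riskAverseStrategy σ) := by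
  unfold riskAverseStrategy
  fun_prop

theorem hasDerivAt_riskAversePrimitive (κ : ℝ) {σ : ℝ} (hσ : σ ≠ 0) (t : ℝ) :
    HasDerivAt (riskAversePrimitive κ σ)
      (deriv (riskAverseStrategy σ) t + κ * riskAverseStrategy σ t) t := by
  have hstrategy : HasDerivAt (riskAverseStrategy σ) (deriv (riskAverseStrategy σ) t) t :=
    ((contDiff_riskAverseStrategy σ).differentiable_one t).hasDerivAt
  have hcosh : HasDerivAt (fun t ↦ Real.cosh (σ * t)) (Real.sinh (σ * t) * σ) t :=
    (hasDerivAt_const_mul σ).cosh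
  refine (hstrategy.add ((hcosh.div_const (Real.sinh σ)).const_mul (κ / σ))).congr_deriv ?_
  rw [riskAverseStrategy]
  field_simp

end RiskAverse

theorem best_response_to_risk_averse (κ lam σ : ℝ) (hκ : 0 ≤ κ) (hlam : 0 < lam)
    (hσ : 0 < σ) (a b q : ℝ → ℝ)
    (hb : ∀ t : ℝ, b t = Real.sinh (σ * t) / Real.sinh σ)
    (hq : ∀ t : ℝ, q t = Real.sinh (σ * t) / Real.sinh σ
      + (κ / σ) * (Real.cosh (σ * t) / Real.sinh σ))
    (ha : ∀ t : ℝ, a t = (lam / 2) * (q 0 - q t)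
      + (1 + (lam / 2) * (q 1 - q 0)) * t) :
    a 0 = 0 ∧ a 1 = 1 ∧
      ∀ g : ℝ → ℝ, ContDiff ℝ 1 g → g 0 = 0 → g 1 = 1 →
        costA κ lam a b ≤ costA κ lam g b := by
  obtain rfl : b = riskAverseStrategy σ := funext hb
  obtain rfl : q = riskAversePrimitive κ σ := funext hq
  obtain rfl : a = bestResponse lam (riskAversePrimitive κ σ) := funext ha
  exact best_response_to_risk_averse_general lam (contDiff_riskAverseStrategy σ)
    (hasDerivAt_riskAversePrimitive κ hσ.ne')
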